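/- Let q ∈ [2,∞], δ ≥ 0, κ ≥ 0, and let A, B ∈ ℝ^{n×m} satisfy ‖A_j − B_j‖_q ≤ δ for every column j ∈ [m]. Let Π₁, Π₂ ∈ ℝ^{n×n} be orthogonal projection matrices with ‖Π₁‖_{q→2} ≤ κ and ‖Π₂‖_{q→2} ≤ κ, and suppose ‖A − Π₁A‖ ≤ ε₁ and ‖B − Π₂B‖ ≤ ε₂, where ‖·‖ is the spectral norm. Then for every η ∈ (0,1): ‖B − Π₁B‖ ≤ √(2η)·‖B‖ + √(1 + 1/η)·(ε₁ + ε₂ + 2√m·δκ), and likewise ‖A − Π₂A‖ ≤ √(2η)·‖A‖ + √(1 + 1/η)·(ε₁ + ε₂ + 2√m·δκ). -/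

import Mathlib

open scoped BigOperators ENNReal
open Matrix

/-- The `ℓ_q` norm of a real vector, for `q ∈ [1,∞]` given as an extended nonnegative real
(`q = ⊤` is the max/sup norm). -/
noncomputable def vecNorm {ι : Type*} [Fintype ι] (q : ℝ≥0∞) (v : ι → ℝ) : ℝ :=
  if q = ⊤ then ⨆ i, |v i| else (∑ i, |v i| ^ q.toReal) ^ (1 / q.toReal)

/-- The `q → p` operator norm of a real matrix:
`‖M‖_{q→p} = sup { ‖Mx‖_p : ‖x‖_q ≤ 1 }`. -/
noncomputable def opNorm {ι₁ ι₂ : Type*} [Fintype ι₁] [Fintype ι₂] (q p : ℝ≥0∞)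
    (M : Matrix ι₁ ι₂ ℝ) : ℝ :=
  sSup {y : ℝ | ∃ x : ι₂ → ℝ, vecNorm q x ≤ 1 ∧ y = vecNorm p (M.mulVec x)}

/-- The squared Frobenius norm of a real matrix. -/
noncomputable def frobSq {ι₁ ι₂ : Type*} [Fintype ι₁] [Fintype ι₂] (M : Matrix ι₁ ι₂ ℝ) : ℝ :=
  ∑ i, ∑ j, (M i j) ^ 2

theorem le_of_sq_le_sq_aux {a b : ℝ} (h : a ^ 2 ≤ b ^ 2) (hb : 0 ≤ b) : a ≤ b :=
  (le_abs_self a).trans (abs_le_of_sq_le_sq h hb)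

theorem vecNorm_eq {ι : Type*} [Fintype ι] (q : ℝ≥0∞) [Fact (1 ≤ q)] (v : ι → ℝ) :
    vecNorm q v = ‖WithLp.toLp q v‖ := by
  unfold vecNorm
  split_ifs with h
  · subst h
    rw [PiLp.norm_eq_ciSup]; simp
  · have h1 : (1 : ℝ≥0∞) ≤ q := Fact.out
    rw [PiLp.norm_eq_sum (ENNReal.toReal_pos (by positivity) h)]
    simp

theorem opNorm_le' {ι₁ ι₂ : Type*} [Fintype ι₁] [Fintype ι₂] (q p : ℝ≥0∞)
    [Fact (1 ≤ q)] (M : Matrix ι₁ ι₂ ℝ) (C : ℝ)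
    (h : ∀ x, vecNorm q x ≤ 1 → vecNorm p (M.mulVec x) ≤ C) : opNorm q p M ≤ C := by
  apply csSup_le
  · exact ⟨_, 0, by rw [vecNorm_eq]; simp, rfl⟩
  · rintro y ⟨x, hx, rfl⟩
    exact h x hx

theorem opNorm_eq {ι₁ ι₂ : Type*} [Fintype ι₁] [Fintype ι₂] [DecidableEq ι₂] (q p : ℝ≥0∞)
    [Fact (1 ≤ q)] [Fact (1 ≤ p)] (M : Matrix ι₁ ι₂ ℝ) :
    opNorm q p M = ‖LinearMap.toContinuousLinearMap (Matrix.toLpLin q p M)‖ := by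
  rw [← ContinuousLinearMap.sSup_unitClosedBall_eq_norm]
  unfold opNorm
  congr 1
  ext y
  simp only [Set.mem_ofPred_eq, Set.mem_image, Metric.mem_closedBall, dist_zero_right]
  constructor
  · rintro ⟨x, hx, rfl⟩
    refine ⟨WithLp.toLp q x, by rwa [← vecNorm_eq], ?_⟩
    rw [vecNorm_eq]; simp [Matrix.toLpLin_apply]
  · rintro ⟨x, hx, rfl⟩
    refine ⟨WithLp.ofLp x, by rwa [vecNorm_eq], ?_⟩
    rw [vecNorm_eq]; simp [Matrix.toLpLin_apply]

theorem vecNorm_mulVec_le {ι₁ ι₂ : Type*} [Fintype ι₁] [Fintype ι₂] (q p : ℝ≥0∞)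
    [Fact (1 ≤ q)] [Fact (1 ≤ p)] (M : Matrix ι₁ ι₂ ℝ) (x : ι₂ → ℝ) :
    vecNorm p (M.mulVec x) ≤ opNorm q p M * vecNorm q x := by
  classical
  rw [opNorm_eq, vecNorm_eq, vecNorm_eq]
  have := (LinearMap.toContinuousLinearMap (Matrix.toLpLin q p M)).le_opNorm (WithLp.toLp q x)
  simpa [Matrix.toLpLin_apply] using this

theorem opNorm_nonneg' {ι₁ ι₂ : Type*} [Fintype ι₁] [Fintype ι₂] (q p : ℝ≥0∞)
    [Fact (1 ≤ q)] [Fact (1 ≤ p)] (M : Matrix ι₁ ι₂ ℝ) : 0 ≤ opNorm q p M := by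
  classical
  rw [opNorm_eq]; positivity

theorem vecNorm_add {ι : Type*} [Fintype ι] (q : ℝ≥0∞) [Fact (1 ≤ q)] (v w : ι → ℝ) :
    vecNorm q (v + w) ≤ vecNorm q v + vecNorm q w := by
  simp only [vecNorm_eq, WithLp.toLp_add]; exact norm_add_le _ _

theorem vecNorm_sub {ι : Type*} [Fintype ι] (q : ℝ≥0∞) [Fact (1 ≤ q)] (v w : ι → ℝ) :
    vecNorm q (v - w) ≤ vecNorm q v + vecNorm q w := by
  simp only [vecNorm_eq, WithLp.toLp_sub]; exact norm_sub_le _ _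

theorem vecNorm_nonneg {ι : Type*} [Fintype ι] (q : ℝ≥0∞) [Fact (1 ≤ q)] (v : ι → ℝ) :
    0 ≤ vecNorm q v := by
  rw [vecNorm_eq]; positivity

theorem vecNorm_two_sq {ι : Type*} [Fintype ι] (v : ι → ℝ) :
    vecNorm 2 v ^ 2 = v ⬝ᵥ v := by
  rw [vecNorm_eq, EuclideanSpace.norm_sq_eq]
  simp [dotProduct, sq]

theorem pyth {n : ℕ} (P : Matrix (Fin n) (Fin n) ℝ) (hs : P.IsSymm) (hp : P * P = P)
    (y : Fin n → ℝ) :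
    vecNorm 2 (y - P *ᵥ y) ^ 2 + vecNorm 2 (P *ᵥ y) ^ 2 = vecNorm 2 y ^ 2 := by
  simp only [vecNorm_two_sq]
  have h : (P *ᵥ y) ⬝ᵥ (P *ᵥ y) = y ⬝ᵥ (P *ᵥ y) := by
    conv_lhs => rw [Matrix.dotProduct_mulVec, Matrix.vecMul_mulVec, hs.eq, hp]
    rw [dotProduct_comm, ← Matrix.mulVec_transpose, hs.eq]
  have h2 : (P *ᵥ y) ⬝ᵥ y = y ⬝ᵥ (P *ᵥ y) := dotProduct_comm _ _
  simp only [sub_dotProduct, dotProduct_sub, h, h2]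
  ring

theorem proj_le {n : ℕ} (P : Matrix (Fin n) (Fin n) ℝ) (hs : P.IsSymm) (hp : P * P = P)
    (y : Fin n → ℝ) : vecNorm 2 (P *ᵥ y) ≤ vecNorm 2 y := by
  have := pyth P hs hp y
  refine le_of_sq_le_sq_aux ?_ (vecNorm_nonneg 2 y)
  nlinarith [sq_nonneg (vecNorm 2 (y - P *ᵥ y))]

theorem PE_le {n m : ℕ} (q : ℝ≥0∞) [Fact (1 ≤ q)] (δ κ : ℝ) (hδ : 0 ≤ δ) (hκ : 0 ≤ κ)
    (E : Matrix (Fin n) (Fin m) ℝ) (hE : ∀ j, vecNorm q (fun i => E i j) ≤ δ)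
    (P : Matrix (Fin n) (Fin n) ℝ) (hP : opNorm q 2 P ≤ κ) (x : Fin m → ℝ)
    (hx : vecNorm 2 x ≤ 1) :
    vecNorm 2 (P *ᵥ (E *ᵥ x)) ≤ Real.sqrt m * δ * κ := by
  have h1 : P *ᵥ (E *ᵥ x) = ∑ j, x j • (P *ᵥ (fun i => E i j)) := by
    rw [Matrix.mulVec_mulVec]
    ext i
    simp [Matrix.mulVec, dotProduct, Matrix.mul_apply, Finset.sum_apply, mul_comm]
  have h2 : ∀ j, vecNorm 2 (P *ᵥ (fun i => E i j)) ≤ κ * δ := fun j =>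
    (vecNorm_mulVec_le q 2 P _).trans (mul_le_mul hP (hE j) (vecNorm_nonneg _ _) hκ)
  have h3 : vecNorm 2 (P *ᵥ (E *ᵥ x)) ≤ ∑ j, |x j| * (κ * δ) := by
    rw [h1, vecNorm_eq, WithLp.toLp_sum]
    refine (norm_sum_le _ _).trans (Finset.sum_le_sum fun j _ => ?_)
    rw [WithLp.toLp_smul, norm_smul, ← vecNorm_eq]
    exact mul_le_mul_of_nonneg_left (h2 j) (abs_nonneg _)
  have h4 : ∑ j, |x j| ≤ Real.sqrt m := by
    apply Real.le_sqrt_of_sq_le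
    have h5 := sq_sum_le_card_mul_sum_sq (s := Finset.univ) (f := fun j => |x j|)
    have h6 : ∑ j, |x j| ^ 2 = vecNorm 2 x ^ 2 := by
      rw [vecNorm_two_sq]; simp [dotProduct, sq]
    rw [h6] at h5
    simp only [Finset.card_univ, Fintype.card_fin] at h5
    have h7 : vecNorm 2 x ^ 2 ≤ 1 := pow_le_one₀ (vecNorm_nonneg _ _) hx
    nlinarith [Nat.cast_nonneg (α := ℝ) m]
  rw [← Finset.sum_mul] at h3
  have := mul_le_mul_of_nonneg_right h4 (mul_nonneg hκ hδ)
  linarith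

theorem half {n m : ℕ} (q : ℝ≥0∞) [Fact (1 ≤ q)]
    (δ κ : ℝ) (hδ : 0 ≤ δ) (hκ : 0 ≤ κ)
    (A B : Matrix (Fin n) (Fin m) ℝ)
    (hcols : ∀ j, vecNorm q (fun i => (A - B) i j) ≤ δ)
    (P₁ P₂ : Matrix (Fin n) (Fin n) ℝ)
    (hP₁sym : P₁.IsSymm) (hP₁proj : P₁ * P₁ = P₁)
    (hP₂sym : P₂.IsSymm) (hP₂proj : P₂ * P₂ = P₂)
    (hP₁ : opNorm q 2 P₁ ≤ κ) (hP₂ : opNorm q 2 P₂ ≤ κ)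
    (ε₁ ε₂ : ℝ)
    (hA : opNorm 2 2 (A - P₁ * A) ≤ ε₁) (hB : opNorm 2 2 (B - P₂ * B) ≤ ε₂)
    (η : ℝ) (hη0 : 0 < η) :
    opNorm 2 2 (B - P₁ * B) ≤
      Real.sqrt (2 * η) * opNorm 2 2 B +
        Real.sqrt (1 + 1 / η) * (ε₁ + ε₂ + 2 * Real.sqrt m * δ * κ) := by
  apply opNorm_le'
  intro x hx
  have hε₁ : 0 ≤ ε₁ := (opNorm_nonneg' _ _ _).trans hA
  have hε₂ : 0 ≤ ε₂ := (opNorm_nonneg' _ _ _).trans hB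
  have key : ∀ (M : Matrix (Fin n) (Fin m) ℝ) (c : ℝ), opNorm 2 2 M ≤ c →
      vecNorm 2 (M *ᵥ x) ≤ c := fun M c h =>
    (vecNorm_mulVec_le 2 2 M x).trans
      ((mul_le_of_le_one_right (opNorm_nonneg' _ _ _) hx).trans h)
  have hR1 := key _ _ hA
  have hR2 := key _ _ hB
  have hy := key _ _ (le_refl (opNorm 2 2 B))
  have hE1 := PE_le q δ κ hδ hκ _ hcols P₁ hP₁ x hx
  have hE2 := PE_le q δ κ hδ hκ _ hcols P₂ hP₂ x hx
  simp only [Matrix.sub_mulVec, ← Matrix.mulVec_mulVec, Matrix.mulVec_sub] at hR1 hR2 hE1 hE2 ⊢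
  generalize A *ᵥ x = a at *
  generalize B *ᵥ x = y at *
  set S := Real.sqrt m * δ * κ with hS
  have hS0 : 0 ≤ S := by positivity
  have e : y = P₂ *ᵥ (P₁ *ᵥ y) + (((y - P₂ *ᵥ y) - (P₂ *ᵥ a - P₂ *ᵥ y))
      + P₂ *ᵥ ((a - P₁ *ᵥ a) + (P₁ *ᵥ a - P₁ *ᵥ y))) := by
    simp only [Matrix.mulVec_sub, Matrix.mulVec_add]; abel
  have b1 := vecNorm_add 2 (P₂ *ᵥ (P₁ *ᵥ y)) (((y - P₂ *ᵥ y) - (P₂ *ᵥ a - P₂ *ᵥ y))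
      + P₂ *ᵥ ((a - P₁ *ᵥ a) + (P₁ *ᵥ a - P₁ *ᵥ y)))
  rw [← e] at b1
  have b2 := vecNorm_add 2 ((y - P₂ *ᵥ y) - (P₂ *ᵥ a - P₂ *ᵥ y))
      (P₂ *ᵥ ((a - P₁ *ᵥ a) + (P₁ *ᵥ a - P₁ *ᵥ y)))
  have b3 := vecNorm_sub 2 (y - P₂ *ᵥ y) (P₂ *ᵥ a - P₂ *ᵥ y)
  have b4 := vecNorm_add 2 (a - P₁ *ᵥ a) (P₁ *ᵥ a - P₁ *ᵥ y)
  have b5 := proj_le P₂ hP₂sym hP₂proj ((a - P₁ *ᵥ a) + (P₁ *ᵥ a - P₁ *ᵥ y))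
  have b6 := proj_le P₂ hP₂sym hP₂proj (P₁ *ᵥ y)
  have b7 := proj_le P₁ hP₁sym hP₁proj y
  have hpy := pyth P₁ hP₁sym hP₁proj y
  have n1 := vecNorm_nonneg 2 y
  have n2 := vecNorm_nonneg 2 (P₁ *ᵥ y)
  have hγ : ε₁ + ε₂ + 2 * Real.sqrt m * δ * κ = ε₁ + ε₂ + 2 * S := by rw [hS]; ring
  rw [hγ]
  set γ := ε₁ + ε₂ + 2 * S
  have hγ0 : 0 ≤ γ := by positivity
  have hb : vecNorm 2 y ≤ vecNorm 2 (P₁ *ᵥ y) + γ := by linarith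
  generalize vecNorm 2 (y - P₁ *ᵥ y) = w at *
  generalize vecNorm 2 (P₁ *ᵥ y) = p at *
  generalize vecNorm 2 y = t at *
  have hN := opNorm_nonneg' 2 2 B
  generalize opNorm 2 2 B = N at *
  refine le_of_sq_le_sq_aux ?_ (by positivity)
  have s1 : Real.sqrt (2 * η) ^ 2 = 2 * η := Real.sq_sqrt (by positivity)
  have s2 : Real.sqrt (1 + 1 / η) ^ 2 = 1 + 1 / η := Real.sq_sqrt (by positivity)
  have c1 : t ^ 2 ≤ (p + γ) ^ 2 := pow_le_pow_left₀ n1 hb 2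
  have c2 : 2 * p * γ ≤ η * p ^ 2 + 1 / η * γ ^ 2 := by
    have : η * p ^ 2 + 1 / η * γ ^ 2 - 2 * p * γ = (η * p - γ) ^ 2 / η := by
      field_simp; ring
    have h0 : 0 ≤ (η * p - γ) ^ 2 / η := by positivity
    linarith
  have c3 : p ^ 2 ≤ N ^ 2 := pow_le_pow_left₀ n2 (b7.trans hy) 2
  have c4 : η * p ^ 2 ≤ 2 * η * N ^ 2 := by nlinarith
  have c5 : 0 ≤ 2 * (Real.sqrt (2 * η) * N) * (Real.sqrt (1 + 1 / η) * γ) := by positivity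
  have c6 : (Real.sqrt (2 * η) * N + Real.sqrt (1 + 1 / η) * γ) ^ 2 =
      2 * η * N ^ 2 + (1 + 1 / η) * γ ^ 2 +
        2 * (Real.sqrt (2 * η) * N) * (Real.sqrt (1 + 1 / η) * γ) := by
    rw [← s1, ← s2]; simp only [s1, s2]
    rw [add_sq, mul_pow, mul_pow, s1, s2]; ring
  rw [c6]
  linarith

/-- If columns of `A, B` are `δ`-close in `ℓ_q`, `Π₁, Π₂` are `(κ,q)`-robust
orthogonal projections with `‖A − Π₁A‖ ≤ ε₁` and `‖B − Π₂B‖ ≤ ε₂` in spectral norm, then for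
every `η ∈ (0,1)`:
`‖B − Π₁B‖ ≤ √(2η)‖B‖ + √(1 + 1/η)(ε₁ + ε₂ + 2√m δκ)` and
`‖A − Π₂A‖ ≤ √(2η)‖A‖ + √(1 + 1/η)(ε₁ + ε₂ + 2√m δκ)`. -/
theorem spectral_identifiability {n m : ℕ} (q : ℝ≥0∞) (hq : 2 ≤ q)
    (δ κ : ℝ) (hδ : 0 ≤ δ) (hκ : 0 ≤ κ)
    (A B : Matrix (Fin n) (Fin m) ℝ)
    (hcols : ∀ j, vecNorm q (fun i => A i j - B i j) ≤ δ)
    (P₁ P₂ : Matrix (Fin n) (Fin n) ℝ)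
    (hP₁sym : P₁.IsSymm) (hP₁proj : P₁ * P₁ = P₁)
    (hP₂sym : P₂.IsSymm) (hP₂proj : P₂ * P₂ = P₂)
    (hP₁ : opNorm q 2 P₁ ≤ κ) (hP₂ : opNorm q 2 P₂ ≤ κ)
    (ε₁ ε₂ : ℝ)
    (hA : opNorm 2 2 (A - P₁ * A) ≤ ε₁) (hB : opNorm 2 2 (B - P₂ * B) ≤ ε₂)
    (η : ℝ) (hη0 : 0 < η) (hη1 : η < 1) :
    opNorm 2 2 (B - P₁ * B) ≤
      Real.sqrt (2 * η) * opNorm 2 2 B +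
        Real.sqrt (1 + 1 / η) * (ε₁ + ε₂ + 2 * Real.sqrt m * δ * κ) ∧
    opNorm 2 2 (A - P₂ * A) ≤
      Real.sqrt (2 * η) * opNorm 2 2 A +
        Real.sqrt (1 + 1 / η) * (ε₁ + ε₂ + 2 * Real.sqrt m * δ * κ) := by
  have : Fact (1 ≤ q) := ⟨le_trans (by norm_num) hq⟩
  refine ⟨half q δ κ hδ hκ A B (by simpa using hcols) P₁ P₂ hP₁sym hP₁proj hP₂sym hP₂proj hP₁ hP₂
    ε₁ ε₂ hA hB η hη0, ?_⟩
  have hc : ∀ j, vecNorm q (fun i => (B - A) i j) ≤ δ := by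
    intro j
    refine le_trans (le_of_eq ?_) (hcols j)
    simp only [vecNorm, Matrix.sub_apply, abs_sub_comm]
  have h := half q δ κ hδ hκ B A hc P₂ P₁ hP₂sym hP₂proj hP₁sym hP₁proj hP₂ hP₁
    ε₂ ε₁ hB hA η hη0
  rwa [add_comm ε₂ ε₁] at h
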